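/- arXiv:2402.13156 — 2 statements merged into one kernel-verified Lean document; each statement's English description precedes it below -/
import Mathlib

section
/- Fix a principal–agent instance and α ∈ (0,1]. For every deterministic contract p ∈ ℝ_{≥0}^Ω and every pair of cost vectors c, c̃ ∈ C, the 'linearized' contract p̃ := p + α·(r − p) satisfies U^p(p̃, c̃) ≥ U^p(p, c) − (2·‖c − c̃‖_∞/α + α). -/
open Finset

variable {A Ω : Type} [Fintype A] [Fintype Ω] [Nonempty A] [Nonempty Ω]

/-- Agent's expected utility `U^a(p,c,a)` of action `a` under contract `p` and costs `c`. -/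
noncomputable def Uag (F : A → Ω → ℝ) (p : Ω → ℝ) (c : A → ℝ) (a : A) : ℝ :=
  (∑ ω, F a ω * p ω) - c a

/-- Principal's expected utility when the agent plays action `a` under contract `p`. -/
noncomputable def prinAct (F : A → Ω → ℝ) (r p : Ω → ℝ) (a : A) : ℝ :=
  ∑ ω, F a ω * (r ω - p ω)

/-- Principal's expected utility `U^p(p,c)`: the agent plays a best response,
with ties among best responses broken in favor of the principal. -/
noncomputable def Uprin (F : A → Ω → ℝ) (r p : Ω → ℝ) (c : A → ℝ) : ℝ :=
  sSup { x | ∃ a : A, (∀ a' : A, Uag F p c a' ≤ Uag F p c a) ∧ x = prinAct F r p a }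

/-- A deterministic contract: nonnegative payments. -/
def IsContract (p : Ω → ℝ) : Prop := ∀ ω, 0 ≤ p ω

/-- `OPT(c)`: the supremum over contracts of the principal's expected utility against `c`. -/
noncomputable def OPT (F : A → Ω → ℝ) (r : Ω → ℝ) (c : A → ℝ) : ℝ :=
  sSup { x | ∃ p : Ω → ℝ, IsContract p ∧ x = Uprin F r p c }

/-- The regret `R(p)` of a deterministic contract `p`. -/
noncomputable def regret (F : A → Ω → ℝ) (r : Ω → ℝ) (C : Set (A → ℝ)) (p : Ω → ℝ) : ℝ :=
  sSup { x | ∃ c ∈ C, x = OPT F r c - Uprin F r p c }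

/-- Uncertainty level `d(C)`: the L∞-diameter of the uncertainty set. -/
noncomputable def uncLevel (C : Set (A → ℝ)) : ℝ :=
  sSup { x | ∃ c ∈ C, ∃ c' ∈ C, x = ‖c - c'‖ }

/-- The assumptions defining a principal–agent instance `(A, Ω, r, C, F)`. -/
structure IsPAInstance (F : A → Ω → ℝ) (r : Ω → ℝ) (C : Set (A → ℝ)) : Prop where
  r_mem : ∀ ω, r ω ∈ Set.Icc (0:ℝ) 1
  F_mem : ∀ a ω, F a ω ∈ Set.Icc (0:ℝ) 1
  F_sum : ∀ a, ∑ ω, F a ω = 1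
  C_nonempty : C.Nonempty
  C_mem : ∀ c ∈ C, ∀ a, c a ∈ Set.Icc (0:ℝ) 1
  zero_action : ∃ a : A, ∀ c ∈ C, c a = 0

/-! Linearization adds `α` times the principal's utility to the agent's utility and scales the
principal's utility by `1 - α`. Changing the costs by `‖c - c'‖` perturbs the agent's comparison of
two actions by at most `2 * ‖c - c'‖`, so the action played under the linearized contract loses the
principal at most `2 * ‖c - c'‖ / α` against the action played under the original one; the factor
`1 - α` loses at most a further `α`, since the principal's utility never exceeds `1`. -/

section Linearization

variable {Act Out : Type} [Fintype Out] {F : Act → Out → ℝ} {r p : Out → ℝ}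

/-- The contract obtained from `p` by moving every payment a fraction `α` of the way to the
reward `r`. -/
def linearize {ι : Type*} (α : ℝ) (r p : ι → ℝ) (i : ι) : ℝ :=
  p i + α * (r i - p i)

/-- The action `a` is a best response of the agent to the contract `p` under the costs `c`,
i.e. `a ∈ A*(p,c)`. -/
def IsBestResponse (F : Act → Out → ℝ) (p : Out → ℝ) (c : Act → ℝ) (a : Act) : Prop :=
  ∀ b, Uag F p c b ≤ Uag F p c a

theorem uag_linearize (α : ℝ) (c : Act → ℝ) (a : Act) :
    Uag F (linearize α r p) c a = Uag F p c a + α * prinAct F r p a := by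
  simp only [Uag, prinAct, linearize, mul_add, mul_left_comm _ α, sum_add_distrib, ← mul_sum]
  ring

theorem prinAct_linearize (α : ℝ) (a : Act) :
    prinAct F r (linearize α r p) a = (1 - α) * prinAct F r p a := by
  simp only [prinAct, linearize, mul_sum]
  exact sum_congr rfl fun ω _ => by ring

theorem prinAct_le_of_forall_sub_le {a : Act} {M : ℝ} (hF : F a ∈ stdSimplex ℝ Out)
    (hM : ∀ ω, r ω - p ω ≤ M) : prinAct F r p a ≤ M :=
  calc
    ∑ ω, F a ω * (r ω - p ω) ≤ ∑ ω, F a ω * M :=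
      sum_le_sum fun ω _ => mul_le_mul_of_nonneg_left (hM ω) (hF.1 ω)
    _ = M := by rw [← sum_mul, hF.2, one_mul]

section CostPerturbation

variable [Fintype Act] {c : Act → ℝ} {a : Act}

theorem abs_uag_sub_uag_le_norm (F : Act → Out → ℝ) (p : Out → ℝ) (c c' : Act → ℝ) (a : Act) :
    |Uag F p c a - Uag F p c' a| ≤ ‖c - c'‖ := by
  simpa [Uag, abs_sub_comm] using norm_le_pi_norm (c - c') a

theorem IsBestResponse.uag_le_uag_add (ha : IsBestResponse F p c a) (c' : Act → ℝ) (b : Act) :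
    Uag F p c' b ≤ Uag F p c' a + 2 * ‖c - c'‖ := by
  have ha_shift := (abs_le.mp (abs_uag_sub_uag_le_norm F p c c' a)).2
  have hb_shift := (abs_le.mp (abs_uag_sub_uag_le_norm F p c c' b)).1
  linarith [ha b]

theorem IsBestResponse.prinAct_le_prinAct_add {α : ℝ} (hα : 0 < α) {c' : Act → ℝ} {b : Act}
    (ha : IsBestResponse F p c a) (hb : IsBestResponse F (linearize α r p) c' b) :
    prinAct F r p a ≤ prinAct F r p b + 2 * ‖c - c'‖ / α := by
  have hb_opt : Uag F p c' a + α * prinAct F r p a ≤ Uag F p c' b + α * prinAct F r p b := by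
    simpa only [uag_linearize] using hb a
  have ha_opt : Uag F p c' b ≤ Uag F p c' a + 2 * ‖c - c'‖ := ha.uag_le_uag_add c' b
  rw [← sub_le_iff_le_add', le_div_iff₀' hα]
  linarith

end CostPerturbation

theorem uprin_eq_sSup_image (F : Act → Out → ℝ) (r p : Out → ℝ) (c : Act → ℝ) :
    Uprin F r p c = sSup (prinAct F r p '' {a | IsBestResponse F p c a}) := by
  simp only [Uprin, Set.image, IsBestResponse, Set.mem_ofPred_eq, eq_comm]

theorem IsBestResponse.prinAct_le_uprin [Finite Act] {c : Act → ℝ} {a : Act}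
    (ha : IsBestResponse F p c a) (r : Out → ℝ) : prinAct F r p a ≤ Uprin F r p c := by
  rw [uprin_eq_sSup_image]
  exact le_csSup (Set.toFinite _).bddAbove (Set.mem_image_of_mem _ ha)

theorem exists_isBestResponse [Finite Act] [Nonempty Act] (F : Act → Out → ℝ) (p : Out → ℝ)
    (c : Act → ℝ) : ∃ a, IsBestResponse F p c a :=
  Finite.exists_max (Uag F p c)

theorem exists_isBestResponse_prinAct_eq_uprin [Finite Act] [Nonempty Act]
    (F : Act → Out → ℝ) (r p : Out → ℝ) (c : Act → ℝ) :
    ∃ a, IsBestResponse F p c a ∧ prinAct F r p a = Uprin F r p c := by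
  have best_nonempty : {a | IsBestResponse F p c a}.Nonempty := exists_isBestResponse F p c
  rw [uprin_eq_sSup_image]
  exact (best_nonempty.image (prinAct F r p)).csSup_mem (Set.toFinite _)

theorem IsPAInstance.mem_stdSimplex {C : Set (Act → ℝ)} (h : IsPAInstance F r C) (a : Act) :
    F a ∈ stdSimplex ℝ Out :=
  ⟨fun ω => (h.F_mem a ω).1, h.F_sum a⟩

theorem IsPAInstance.sub_le_one {C : Set (Act → ℝ)} (h : IsPAInstance F r C)
    (hp : IsContract p) (ω : Out) : r ω - p ω ≤ 1 :=
  (sub_le_self _ (hp ω)).trans (h.r_mem ω).2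

theorem linearized_contract_guarantee_general [Fintype Act] [Nonempty Act] {α M : ℝ}
    (hF : ∀ a, F a ∈ stdSimplex ℝ Out) (hα : 0 < α) (hM : ∀ ω, r ω - p ω ≤ M) (c c' : Act → ℝ) :
    Uprin F r p c - (2 * ‖c - c'‖ / α + α * M) ≤ Uprin F r (linearize α r p) c' := by
  obtain ⟨a, ha, ha_eq⟩ := exists_isBestResponse_prinAct_eq_uprin F r p c
  obtain ⟨b, hb⟩ := exists_isBestResponse F (linearize α r p) c'
  have hab : prinAct F r p a ≤ prinAct F r p b + 2 * ‖c - c'‖ / α :=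
    ha.prinAct_le_prinAct_add hα hb
  have hbM : α * prinAct F r p b ≤ α * M :=
    mul_le_mul_of_nonneg_left (prinAct_le_of_forall_sub_le (hF b) hM) hα.le
  calc
    Uprin F r p c - (2 * ‖c - c'‖ / α + α * M) ≤ (1 - α) * prinAct F r p b := by
      rw [← ha_eq]
      linarith
    _ = prinAct F r (linearize α r p) b := (prinAct_linearize α b).symm
    _ ≤ Uprin F r (linearize α r p) c' := hb.prinAct_le_uprin r

end Linearization

/-- For every deterministic contract `p` and cost vectors `c, c̃ ∈ C`,
the linearized contract `p̃ := p + α (r - p)` satisfies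
`U^p(p̃, c̃) ≥ U^p(p, c) − (2‖c − c̃‖_∞ / α + α)`. -/
theorem linearized_contract_guarantee
    {A Ω : Type} [Fintype A] [Fintype Ω] [Nonempty A] [Nonempty Ω]
    (F : A → Ω → ℝ) (r : Ω → ℝ) (C : Set (A → ℝ))
    (hInst : IsPAInstance F r C)
    (α : ℝ) (hα : α ∈ Set.Ioc (0:ℝ) 1)
    (p : Ω → ℝ) (hp : IsContract p)
    (c ctil : A → ℝ) (hc : c ∈ C) (hctil : ctil ∈ C) :
    Uprin F r (fun ω => p ω + α * (r ω - p ω)) ctil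
      ≥ Uprin F r p c - (2 * ‖c - ctil‖ / α + α) := by
  simpa only [mul_one] using! linearized_contract_guarantee_general hInst.mem_stdSimplex hα.1
    (hInst.sub_le_one hp) c ctil
end

section
/- In any principal–agent instance, for every positive integer K there exists a K-tuple Π* of deterministic contracts attaining the infimum of the regret over K-tuples, i.e. R(Π*) = inf over all K-tuples Π of deterministic contracts of R(Π). -/
open Finset

variable {A Ω : Type} [Fintype A] [Fintype Ω] [Nonempty A] [Nonempty Ω]

/-- The agent's best-response utility under contract `p`. -/
noncomputable def agentBest (F : A → Ω → ℝ) (p : Ω → ℝ) (c : A → ℝ) : ℝ :=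
  ⨆ a : A, Uag F p c a

/-- Principal's expected utility `U^p(Π,c)` under a menu of deterministic contracts:
the agent selects an element maximizing its own utility, breaking ties in favor of
the principal. -/
noncomputable def UprinMenu (F : A → Ω → ℝ) (r : Ω → ℝ) {K : ℕ} (m : Fin K → Ω → ℝ)
    (c : A → ℝ) : ℝ :=
  sSup { x | ∃ i : Fin K, (∀ j : Fin K, agentBest F (m j) c ≤ agentBest F (m i) c) ∧
    x = Uprin F r (m i) c }

/-- The regret `R(Π)` of a menu of deterministic contracts. -/
noncomputable def regretMenu (F : A → Ω → ℝ) (r : Ω → ℝ) (C : Set (A → ℝ)) {K : ℕ}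
    (m : Fin K → Ω → ℝ) : ℝ :=
  sSup { x | ∃ c ∈ C, x = OPT F r c - UprinMenu F r m c }

/-!
The agent's choice of a menu entry followed by an action is a single choice among the finitely many
pairs `(i, a)`, with ties broken for the principal. The value of such a choice is upper
semicontinuous in the menu, so the regret, a supremum over cost vectors, is lower semicontinuous.

Payments on outcomes that no action produces do not affect the regret and may be dropped. For the
remaining ones the regret is coercive: agent and principal share the welfare, so a menu entry that
pays a lot in expectation for some action forces the principal's utility down. Hence it suffices to
minimize the regret over a compact box of menus.
-/

section OptimisticValue

variable {ι κ β γ X : Type*}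

/-- The value `v i` of a maximizer `i` of `u`, where ties between maximizers are broken in favor of
`v`. The set is written as in `Uprin` and `UprinMenu`, which are thereby instances of this notion
by definition. -/
def optimisticValue [LE β] [SupSet γ] (u : ι → β) (v : ι → γ) : γ :=
  sSup {x | ∃ i, (∀ j, u j ≤ u i) ∧ x = v i}

lemma finite_setOf_maximizer_value [LE β] [Finite ι] (u : ι → β) (v : ι → γ) :
    {x | ∃ i, (∀ j, u j ≤ u i) ∧ x = v i}.Finite :=
  (Set.finite_range v).subset fun _ ⟨i, _, hx⟩ => ⟨i, hx.symm⟩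

lemma exists_maximizer_optimisticValue_eq [LinearOrder β] [ConditionallyCompleteLinearOrder γ]
    [Finite ι] [Nonempty ι] (u : ι → β) (v : ι → γ) :
    ∃ i, (∀ j, u j ≤ u i) ∧ optimisticValue u v = v i := by
  obtain ⟨i, hi⟩ := Finite.exists_max u
  have nonempty : {x | ∃ i, (∀ j, u j ≤ u i) ∧ x = v i}.Nonempty := ⟨v i, i, hi, rfl⟩
  exact nonempty.csSup_mem (finite_setOf_maximizer_value u v)

lemma le_optimisticValue [LE β] [ConditionallyCompleteLinearOrder γ] [Finite ι]
    {u : ι → β} {v : ι → γ} {i : ι} (hi : ∀ j, u j ≤ u i) : v i ≤ optimisticValue u v :=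
  have : Nonempty γ := ⟨v i⟩
  le_csSup (finite_setOf_maximizer_value u v).bddAbove ⟨i, hi, rfl⟩

lemma le_optimisticValue_iff [LinearOrder β] [ConditionallyCompleteLinearOrder γ]
    [Finite ι] [Nonempty ι] {u : ι → β} {v : ι → γ} {t : γ} :
    t ≤ optimisticValue u v ↔ ∃ i, (∀ j, u j ≤ u i) ∧ t ≤ v i := by
  constructor
  · intro ht
    obtain ⟨i, hi, hval⟩ := exists_maximizer_optimisticValue_eq u v
    exact ⟨i, hi, hval ▸ ht⟩
  · rintro ⟨i, hi, ht⟩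
    exact ht.trans (le_optimisticValue hi)

lemma forall_iSup_le_iSup_and_forall_le_iff [ConditionallyCompleteLinearOrder β] [Finite κ]
    [Nonempty κ] {u : ι → κ → β} {i : ι} {a : κ} :
    ((∀ j, (⨆ b, u j b) ≤ ⨆ b, u i b) ∧ ∀ b, u i b ≤ u i a) ↔ ∀ j b, u j b ≤ u i a := by
  have le_iSup (j : ι) (b : κ) : u j b ≤ ⨆ b, u j b := Finite.le_ciSup (u j) b
  constructor
  · rintro ⟨hi, ha⟩ j b
    exact (le_iSup j b).trans ((hi j).trans (ciSup_le ha))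
  · intro h
    exact ⟨fun j => (ciSup_le (h j)).trans (le_iSup i a), h i⟩

lemma optimisticValue_iSup_optimisticValue [ConditionallyCompleteLinearOrder β]
    [ConditionallyCompleteLinearOrder γ] [Finite ι] [Nonempty ι] [Finite κ] [Nonempty κ]
    (u : ι → κ → β) (v : ι → κ → γ) :
    optimisticValue (fun i => ⨆ a, u i a) (fun i => optimisticValue (u i) (v i)) =
      optimisticValue (fun q : ι × κ => u q.1 q.2) (fun q => v q.1 q.2) := by
  refine eq_of_forall_le_iff fun t => ?_
  simp only [le_optimisticValue_iff, Prod.exists, Prod.forall,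
    ← forall_iSup_le_iSup_and_forall_le_iff, ← exists_and_left, and_assoc]

lemma upperSemicontinuous_optimisticValue [TopologicalSpace X] [LinearOrder β]
    [TopologicalSpace β] [OrderClosedTopology β] [ConditionallyCompleteLinearOrder γ]
    [Finite ι] [Nonempty ι] {u : X → ι → β} {v : X → ι → γ}
    (hu : ∀ i, Continuous fun x => u x i) (hv : ∀ i, UpperSemicontinuous fun x => v x i) :
    UpperSemicontinuous fun x => optimisticValue (u x) (v x) := by
  rw [upperSemicontinuous_iff_isClosed_preimage]
  intro t
  have superlevel_eq : (fun x => optimisticValue (u x) (v x)) ⁻¹' Set.Ici t =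
      ⋃ i, (⋂ j, {x | u x j ≤ u x i}) ∩ (fun x => v x i) ⁻¹' Set.Ici t := by
    ext x
    simp only [Set.mem_preimage, Set.mem_Ici, le_optimisticValue_iff, Set.mem_iUnion,
      Set.mem_inter_iff, Set.mem_iInter, Set.mem_ofPred_eq]
  rw [superlevel_eq]
  exact isClosed_iUnion_of_finite fun i =>
    (isClosed_iInter fun j => isClosed_le (hu j) (hu i)).inter ((hv i).isClosed_preimage t)

end OptimisticValue

section Contracts

variable {A Ω : Type} [Fintype Ω] {F : A → Ω → ℝ} {r : Ω → ℝ} {C : Set (A → ℝ)} {K : ℕ}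

lemma Uag_eq_dotProduct_sub (p : Ω → ℝ) (c : A → ℝ) (a : A) :
    Uag F p c a = F a ⬝ᵥ p - c a :=
  rfl

lemma prinAct_eq_dotProduct_sub (p : Ω → ℝ) (a : A) :
    prinAct F r p a = F a ⬝ᵥ r - F a ⬝ᵥ p :=
  dotProduct_sub (F a) r p

lemma regretMenu_eq_iSup (m : Fin K → Ω → ℝ) :
    regretMenu F r C m = ⨆ c : C, (OPT F r c - UprinMenu F r m c) := by
  rw [← sSup_image' (f := fun c => OPT F r c - UprinMenu F r m c)]
  simp only [regretMenu, Set.image, eq_comm]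

lemma regretMenu_congr {m m' : Fin K → Ω → ℝ} (h : ∀ i a, F a ⬝ᵥ m i = F a ⬝ᵥ m' i) :
    regretMenu F r C m = regretMenu F r C m' := by
  have Uag_eq (i : Fin K) : Uag F (m i) = Uag F (m' i) := by
    ext c a
    simp only [Uag_eq_dotProduct_sub, h]
  have prinAct_eq (i : Fin K) : prinAct F r (m i) = prinAct F r (m' i) := by
    ext a
    simp only [prinAct_eq_dotProduct_sub, h]
  simp only [regretMenu, UprinMenu, Uprin, agentBest, Uag_eq, prinAct_eq]

/-- The outcomes that some action produces with nonzero probability; only payments on these matter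
for the utilities. -/
def reachableOutcomes (F : A → Ω → ℝ) : Set Ω := {ω | ∃ a, F a ω ≠ 0}

lemma dotProduct_indicator_reachableOutcomes (p : Ω → ℝ) (a : A) :
    F a ⬝ᵥ (reachableOutcomes F).indicator p = F a ⬝ᵥ p := by
  refine Finset.sum_congr rfl fun ω _ => ?_
  by_cases hω : ω ∈ reachableOutcomes F
  · rw [Set.indicator_of_mem hω]
  · have : F a ω = 0 := not_not.mp fun h => hω ⟨a, h⟩
    simp only [this, zero_mul]

lemma exists_indicator_reachableOutcomes_le (hF : ∀ a ω, 0 ≤ F a ω) (T : ℝ) :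
    ∃ B : Ω → ℝ, ∀ p, IsContract p → (∀ a, F a ⬝ᵥ p ≤ T) →
      (reachableOutcomes F).indicator p ≤ B := by
  have pointwise (ω : Ω) : ∃ b, ∀ p, IsContract p → (∀ a, F a ⬝ᵥ p ≤ T) →
      (reachableOutcomes F).indicator p ω ≤ b := by
    by_cases hω : ω ∈ reachableOutcomes F
    · obtain ⟨a, ha⟩ := hω
      have Fpos : 0 < F a ω := (hF a ω).lt_of_ne' ha
      refine ⟨T / F a ω, fun p hp hT => ?_⟩
      rw [Set.indicator_of_mem (s := reachableOutcomes F) ⟨a, ha⟩, le_div_iff₀' Fpos]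
      calc F a ω * p ω
        _ ≤ F a ⬝ᵥ p := Finset.single_le_sum (f := fun ω => F a ω * p ω)
              (fun ω _ => mul_nonneg (hF a ω) (hp ω)) (Finset.mem_univ ω)
        _ ≤ T := hT a
    · exact ⟨0, fun p _ _ => (Set.indicator_of_notMem hω p).le⟩
  choose B hB using pointwise
  exact ⟨B, fun p hp hT ω => hB ω p hp hT⟩

variable [Finite A] [Nonempty A]

lemma Uprin_le {R : ℝ} (hF : ∀ a ω, 0 ≤ F a ω) (hR : ∀ a, F a ⬝ᵥ r ≤ R) {p : Ω → ℝ}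
    (hp : IsContract p) (c : A → ℝ) : Uprin F r p c ≤ R := by
  obtain ⟨a, -, hval⟩ := exists_maximizer_optimisticValue_eq (Uag F p c) (prinAct F r p)
  calc Uprin F r p c
    _ = F a ⬝ᵥ r - F a ⬝ᵥ p := hval.trans (prinAct_eq_dotProduct_sub p a)
    _ ≤ F a ⬝ᵥ r := sub_le_self _ (dotProduct_nonneg_of_nonneg (hF a) hp)
    _ ≤ R := hR a

lemma OPT_le {R : ℝ} (hF : ∀ a ω, 0 ≤ F a ω) (hR : ∀ a, F a ⬝ᵥ r ≤ R) (c : A → ℝ) :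
    OPT F r c ≤ R := by
  refine csSup_le ⟨_, 0, fun _ => le_rfl, rfl⟩ ?_
  rintro _ ⟨p, hp, rfl⟩
  exact Uprin_le hF hR hp c

variable [NeZero K]

lemma UprinMenu_eq_optimisticValue (m : Fin K → Ω → ℝ) (c : A → ℝ) :
    UprinMenu F r m c = optimisticValue (fun q : Fin K × A => Uag F (m q.1) c q.2)
      (fun q => prinAct F r (m q.1) q.2) :=
  optimisticValue_iSup_optimisticValue (fun i => Uag F (m i) c) (fun i => prinAct F r (m i))

lemma exists_Uag_maximizer_UprinMenu_eq (m : Fin K → Ω → ℝ) (c : A → ℝ) :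
    ∃ i a, (∀ j b, Uag F (m j) c b ≤ Uag F (m i) c a) ∧
      UprinMenu F r m c = prinAct F r (m i) a := by
  rw [UprinMenu_eq_optimisticValue]
  obtain ⟨⟨i, a⟩, hmax, hval⟩ := exists_maximizer_optimisticValue_eq
    (fun q : Fin K × A => Uag F (m q.1) c q.2) (fun q => prinAct F r (m q.1) q.2)
  exact ⟨i, a, fun j b => hmax (j, b), hval⟩

lemma Uag_add_UprinMenu_le {W : ℝ} {c : A → ℝ} (hW : ∀ a, F a ⬝ᵥ r - c a ≤ W)
    (m : Fin K → Ω → ℝ) (i : Fin K) (a : A) :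
    Uag F (m i) c a + UprinMenu F r m c ≤ W := by
  obtain ⟨j, b, hmax, hval⟩ := exists_Uag_maximizer_UprinMenu_eq (F := F) (r := r) m c
  calc Uag F (m i) c a + UprinMenu F r m c
    _ ≤ Uag F (m j) c b + prinAct F r (m j) b := add_le_add (hmax i a) hval.le
    _ = F b ⬝ᵥ r - c b := by rw [Uag_eq_dotProduct_sub, prinAct_eq_dotProduct_sub]; ring
    _ ≤ W := hW b

lemma bddAbove_range_OPT_sub_UprinMenu (hF : ∀ a ω, 0 ≤ F a ω) (m : Fin K → Ω → ℝ) :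
    BddAbove (Set.range fun c : C => OPT F r c - UprinMenu F r m c) := by
  obtain ⟨R, hR⟩ := Finite.bddAbove_range fun a => F a ⬝ᵥ r
  obtain ⟨b, hb⟩ := Finite.bddBelow_range fun q : Fin K × A => prinAct F r (m q.1) q.2
  refine ⟨R - b, ?_⟩
  rintro _ ⟨c, rfl⟩
  obtain ⟨i, a, -, hval⟩ := exists_Uag_maximizer_UprinMenu_eq (F := F) (r := r) m c
  exact sub_le_sub (OPT_le hF (fun a => hR ⟨a, rfl⟩) c) (hval ▸ hb ⟨(i, a), rfl⟩)

lemma upperSemicontinuous_UprinMenu (c : A → ℝ) :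
    UpperSemicontinuous fun m : Fin K → Ω → ℝ => UprinMenu F r m c := by
  simp only [UprinMenu_eq_optimisticValue]
  refine upperSemicontinuous_optimisticValue (fun q => ?_)
    (fun q => Continuous.upperSemicontinuous ?_)
  · simp only [Uag_eq_dotProduct_sub]
    fun_prop
  · simp only [prinAct_eq_dotProduct_sub]
    fun_prop

lemma lowerSemicontinuous_regretMenu (hF : ∀ a ω, 0 ≤ F a ω) :
    LowerSemicontinuous fun m : Fin K → Ω → ℝ => regretMenu F r C m := by
  simp only [regretMenu_eq_iSup]
  exact lowerSemicontinuous_ciSup (bddAbove_range_OPT_sub_UprinMenu hF) fun c =>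
    (continuous_sub_left (OPT F r c)).comp_upperSemicontinuous_antitone
      (upperSemicontinuous_UprinMenu (c : A → ℝ)) fun _ _ h => sub_le_sub_left h _

lemma exists_dotProduct_le_regretMenu_add (hF : ∀ a ω, 0 ≤ F a ω) (hC : C.Nonempty) :
    ∃ T, ∀ (m : Fin K → Ω → ℝ) i a, F a ⬝ᵥ m i ≤ regretMenu F r C m + T := by
  obtain ⟨c, hc⟩ := hC
  obtain ⟨W, hW⟩ := Finite.bddAbove_range fun a => F a ⬝ᵥ r - c a
  obtain ⟨D, hD⟩ := Finite.bddAbove_range c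
  refine ⟨W + D - OPT F r c, fun m i a => ?_⟩
  have regret_ge : OPT F r c - UprinMenu F r m c ≤ regretMenu F r C m := by
    rw [regretMenu_eq_iSup]
    exact le_ciSup (bddAbove_range_OPT_sub_UprinMenu hF m) ⟨c, hc⟩
  have welfare_le : F a ⬝ᵥ m i - c a + UprinMenu F r m c ≤ W :=
    Uag_add_UprinMenu_le (fun b => hW ⟨b, rfl⟩) m i a
  have cost_le : c a ≤ D := hD ⟨a, rfl⟩
  linarith

lemma exists_indicator_mem_Icc_of_regretMenu_le (hF : ∀ a ω, 0 ≤ F a ω) (hC : C.Nonempty)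
    (ρ : ℝ) :
    ∃ B : Fin K → Ω → ℝ, ∀ m : Fin K → Ω → ℝ, (∀ i, IsContract (m i)) →
      regretMenu F r C m ≤ ρ →
      (fun i => (reachableOutcomes F).indicator (m i)) ∈ Set.Icc 0 B := by
  obtain ⟨T, hT⟩ := exists_dotProduct_le_regretMenu_add (r := r) (K := K) hF hC
  obtain ⟨B, hB⟩ := exists_indicator_reachableOutcomes_le hF (ρ + T)
  refine ⟨fun _ => B, fun m hm hρ => ⟨fun i => ?_, fun i => ?_⟩⟩
  · exact Set.indicator_nonneg fun ω _ => hm i ω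
  · exact hB (m i) (hm i) fun a => (hT m i a).trans (by gcongr)

end Contracts

theorem exists_regret_minimizing_menu_fixed_size_general
    {A Ω : Type} [Finite A] [Fintype Ω] [Nonempty A]
    (F : A → Ω → ℝ) (r : Ω → ℝ) (C : Set (A → ℝ))
    (hF : ∀ a ω, 0 ≤ F a ω) (hC : C.Nonempty)
    (K : ℕ) [NeZero K] :
    ∃ mstar : Fin K → Ω → ℝ, (∀ i, IsContract (mstar i)) ∧
      regretMenu F r C mstar =
        sInf {x | ∃ m : Fin K → Ω → ℝ, (∀ i, IsContract (m i)) ∧ x = regretMenu F r C m} := by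
  obtain ⟨B, hB⟩ := exists_indicator_mem_Icc_of_regretMenu_le (r := r) (K := K) hF hC
    (regretMenu F r C (0 : Fin K → Ω → ℝ))
  have zero_mem : (0 : Fin K → Ω → ℝ) ∈ Set.Icc 0 B :=
    ⟨le_rfl, fun i ω => by simpa using (hB 0 (fun _ _ => le_rfl) le_rfl).2 i ω⟩
  obtain ⟨mstar, mstar_mem, mstar_min⟩ :=
    ((lowerSemicontinuous_regretMenu (r := r) (C := C) hF).lowerSemicontinuousOn _).exists_isMinOn
      (Set.nonempty_of_mem zero_mem) isCompact_Icc
  refine ⟨mstar, mstar_mem.1, Eq.symm <| IsLeast.csInf_eq ⟨⟨mstar, mstar_mem.1, rfl⟩, ?_⟩⟩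
  rintro _ ⟨m, hm, rfl⟩
  rcases le_total (regretMenu F r C m) (regretMenu F r C (0 : Fin K → Ω → ℝ)) with h | h
  · calc regretMenu F r C mstar
      _ ≤ regretMenu F r C fun i => (reachableOutcomes F).indicator (m i) :=
        mstar_min (hB m hm h)
      _ = regretMenu F r C m :=
        regretMenu_congr fun i a => dotProduct_indicator_reachableOutcomes (m i) a
  · exact (mstar_min zero_mem).trans h

/-- For every positive integer `K` there exists a `K`-tuple of
deterministic contracts attaining the infimum of the regret over `K`-tuples. -/
theorem exists_regret_minimizing_menu_fixed_size
    {A Ω : Type} [Fintype A] [Fintype Ω] [Nonempty A] [Nonempty Ω]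
    (F : A → Ω → ℝ) (r : Ω → ℝ) (C : Set (A → ℝ))
    (hInst : IsPAInstance F r C)
    (K : ℕ) (hK : 0 < K) :
    ∃ mstar : Fin K → Ω → ℝ, (∀ i, IsContract (mstar i)) ∧
      regretMenu F r C mstar =
        sInf { x | ∃ m : Fin K → Ω → ℝ, (∀ i, IsContract (m i)) ∧ x = regretMenu F r C m } := by
  have : NeZero K := NeZero.of_pos hK
  exact exists_regret_minimizing_menu_fixed_size_general F r C
    (fun a ω => (hInst.F_mem a ω).1) hInst.C_nonempty K
end
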